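/- For every open pooling set P = ⋃_i (ξ_i, ζ_i) and every θ ∈ [0,1]: Γ_P(θ) = Γ_∅(θ) if and only if θ does not lie in any of the open intervals (ξ_i, ζ_i) (intervals of the real line); moreover, Γ_P(θ) < Γ_∅(θ) whenever θ ∈ (ξ_i, ζ_i) for some i. -/

import Mathlib

open MeasureTheory Set
open scoped Classical

noncomputable section

/-- CDF associated with the density `f` (relevant on `[0,1]`): `F(x) = ∫_0^x f`. -/
def cdfF (f : ℝ → ℝ) (x : ℝ) : ℝ := ∫ t in (0:ℝ)..x, f t

/-- Conditional mean `E_F[θ | (ξ,ζ)]` of `θ` on the interval `(ξ, ζ)` under density `f`. -/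
def condMean (f : ℝ → ℝ) (ξ ζ : ℝ) : ℝ :=
  (∫ t in ξ..ζ, t * f t) / (∫ t in ξ..ζ, f t)

/-- `f` is a strictly positive density of a probability measure on `[0,1]`. -/
def IsDensity (f : ℝ → ℝ) : Prop :=
  (∀ θ ∈ Icc (0:ℝ) 1, 0 < f θ) ∧ IntegrableOn f (Icc (0:ℝ) 1) ∧
    (∫ t in (0:ℝ)..1, f t) = 1

/-- An open pooling set: a relatively open subset of `[0,1]`. -/
def IsPoolingSet (P : Set ℝ) : Prop :=
  ∃ U : Set ℝ, IsOpen U ∧ P = U ∩ Icc (0:ℝ) 1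

/-- Left endpoint `ξ_i` of the interval component of `θ` in `P`. -/
def compInf (P : Set ℝ) (θ : ℝ) : ℝ := sInf (connectedComponentIn P θ)

/-- Right endpoint `ζ_i` of the interval component of `θ` in `P`. -/
def compSup (P : Set ℝ) (θ : ℝ) : ℝ := sSup (connectedComponentIn P θ)

/-- The posterior-mean map induced by the pooling set `P`: states in a pooled
interval are mapped to the conditional mean of that interval, other states to
themselves. -/
def poolMean (f : ℝ → ℝ) (P : Set ℝ) (θ : ℝ) : ℝ :=
  if θ ∈ P then condMean f (compInf P θ) (compSup P θ) else θ

/-- The induced distribution `G_P` of posterior means. -/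
def Gp (f : ℝ → ℝ) (P : Set ℝ) (θ : ℝ) : ℝ :=
  if θ ∈ P then
    (if θ < condMean f (compInf P θ) (compSup P θ) then cdfF f (compInf P θ)
     else cdfF f (compSup P θ))
  else cdfF f θ

/-- `Γ_P(θ) = ∫_0^θ G_P(t) dt`. -/
def Gam (f : ℝ → ℝ) (P : Set ℝ) (θ : ℝ) : ℝ := ∫ t in (0:ℝ)..θ, Gp f P t

/-- The value `∫_0^1 u(θ) dG_P(θ)` of the pooling set `P` under payoff `u`,
written as the expectation of `u` composed with the posterior-mean map. -/
def poolValue (f : ℝ → ℝ) (u : ℝ → ℝ) (P : Set ℝ) : ℝ :=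
  ∫ θ in (0:ℝ)..1, u (poolMean f P θ) * f θ

/-- `P` is an optimal pooling set for `u`. -/
def IsOptimal (f : ℝ → ℝ) (u : ℝ → ℝ) (P : Set ℝ) : Prop :=
  IsPoolingSet P ∧ ∀ Q : Set ℝ, IsPoolingSet Q → poolValue f u Q ≤ poolValue f u P

/-!
The deviation `G_P - F` vanishes off `P`. On a component `(ξ, ζ)` of `P` with conditional mean `m`
it equals `F(ξ) - F < 0` up to `m` and `F(ζ) - F > 0` afterwards. Integration by parts gives
`∫_ξ^ζ F = (m - ξ) F(ξ) + (ζ - m) F(ζ)`, which is `∫_ξ^ζ G_P`, so the deviation has integral zero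
over each component while its partial integrals inside the component are negative. Summing over the
countably many components to the left of `θ` leaves only the partial integral over the component
containing `θ`, if there is one.
-/

section IntervalIntegral

variable {E : Type*} [NormedAddCommGroup E] {a b x y : ℝ}

lemma intervalIntegrable_of_mem_Icc {f : ℝ → E} (hf : IntegrableOn f (Icc a b))
    (hx : x ∈ Icc a b) (hy : y ∈ Icc a b) : IntervalIntegrable f volume x y :=
  (hf.mono_set (ordConnected_Icc.uIcc_subset hx hy)).intervalIntegrable

lemma integral_lt_integral_of_lt_on_Ioo {f g : ℝ → ℝ} (hab : a < b)
    (hf : IntervalIntegrable f volume a b) (hg : IntervalIntegrable g volume a b)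
    (hfg : ∀ t ∈ Ioo a b, f t < g t) : ∫ t in a..b, f t < ∫ t in a..b, g t := by
  have hpos := intervalIntegral.intervalIntegral_pos_of_pos_on (hg.sub hf)
    (fun t ht => sub_pos.2 (hfg t ht)) hab
  rwa [intervalIntegral.integral_sub hg hf, sub_pos] at hpos

lemma integral_ite_lt [NormedSpace ℝ E] [CompleteSpace E] {m : ℝ} (hm : m ∈ Icc a b) (c d : E) :
    ∫ t in a..b, (if t < m then c else d) = (m - a) • c + (b - m) • d := by
  have hleft : EqOn (fun _ => c) (fun t => if t < m then c else d) (Ioo a m) :=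
    fun t ht => (if_pos ht.2).symm
  have hright : EqOn (fun _ => d) (fun t => if t < m then c else d) (Ioo m b) :=
    fun t ht => (if_neg ht.1.not_gt).symm
  rw [← intervalIntegral.integral_add_adjacent_intervals (b := m),
    ← intervalIntegral.integral_congr_Ioo_of_le hm.1 hleft,
    ← intervalIntegral.integral_congr_Ioo_of_le hm.2 hright,
    intervalIntegral.integral_const, intervalIntegral.integral_const]
  · exact (intervalIntegrable_const (c := c)).congr_uIoo (by rwa [uIoo_of_le hm.1])
  · exact (intervalIntegrable_const (c := d)).congr_uIoo (by rwa [uIoo_of_le hm.2])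

lemma integral_primitive_eq_integral_sub_mul {f : ℝ → ℝ} (hf : IntervalIntegrable f volume a b) :
    ∫ x in a..b, ∫ t in a..x, f t = ∫ t in a..b, (b - t) * f t := by
  have hsub : AbsolutelyContinuousOnInterval (fun x => b - x) a b :=
    (contDiff_const.sub contDiff_id (n := 1)).contDiffOn.absolutelyContinuousOnInterval
  have hparts := hsub.integral_mul_deriv_eq_deriv_mul
    (hf.absolutelyContinuousOnInterval_intervalIntegral left_mem_uIcc)
  have hderiv : ∫ x in a..b, (b - x) * deriv (fun x => ∫ t in a..x, f t) x =
      ∫ t in a..b, (b - t) * f t := by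
    refine intervalIntegral.integral_congr_ae ?_
    filter_upwards [hf.ae_hasDerivAt_integral] with x hx hxab
    rw [(hx (uIoc_subset_uIcc hxab) a left_mem_uIcc).deriv]
  simpa [hderiv] using hparts.symm

end IntervalIntegral

section ConnectedComponentIn

lemma sUnion_image_connectedComponentIn {X : Type*} [TopologicalSpace X] (P : Set X) :
    ⋃₀ (connectedComponentIn P '' P) = P := by
  refine subset_antisymm (sUnion_subset ?_) fun x hx =>
    ⟨_, mem_image_of_mem _ hx, mem_connectedComponentIn hx⟩
  rintro _ ⟨x, -, rfl⟩
  exact connectedComponentIn_subset P x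

lemma pairwiseDisjoint_image_connectedComponentIn {X : Type*} [TopologicalSpace X] (P : Set X) :
    (connectedComponentIn P '' P).PairwiseDisjoint id := by
  rintro _ ⟨x, -, rfl⟩ _ ⟨y, -, rfl⟩ hne
  exact disjoint_left.2 fun z hzx hzy =>
    hne ((connectedComponentIn_eq hzx).trans (connectedComponentIn_eq hzy).symm)

lemma integral_eq_of_forall_connectedComponentIn {X E : Type*} [TopologicalSpace X]
    [MeasurableSpace X] [NormedAddCommGroup E] [NormedSpace ℝ E] {μ : Measure X} {P : Set X}
    {g h : X → E} (hcount : (connectedComponentIn P '' P).Countable)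
    (hmeas : ∀ x ∈ P, MeasurableSet (connectedComponentIn P x))
    (hg : Integrable g μ) (hh : Integrable h μ) (hoff : EqOn g h Pᶜ)
    (hcomp : ∀ x ∈ P,
      ∫ t in connectedComponentIn P x, g t ∂μ = ∫ t in connectedComponentIn P x, h t ∂μ) :
    ∫ t, g t ∂μ = ∫ t, h t ∂μ := by
  have := hcount.to_subtype
  have hmeas' : ∀ C : connectedComponentIn P '' P, MeasurableSet (C : Set X) := by
    rintro ⟨_, x, hx, rfl⟩
    exact hmeas x hx
  have hPU : ⋃ C : connectedComponentIn P '' P, (C : Set X) = P := by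
    rw [← sUnion_eq_iUnion, sUnion_image_connectedComponentIn]
  have hP : MeasurableSet P := hPU ▸ MeasurableSet.iUnion hmeas'
  have hsum : ∀ k : X → E, Integrable k μ →
      ∫ t in P, k t ∂μ = ∑' C : connectedComponentIn P '' P, ∫ t in (C : Set X), k t ∂μ :=
    fun k hk => by
      rw [← integral_iUnion hmeas' _ hk.integrableOn, hPU]
      exact (pairwiseDisjoint_image_connectedComponentIn P).subtype _ _
  rw [← integral_add_compl hP hg, ← integral_add_compl hP hh, hsum g hg, hsum h hh,
    setIntegral_congr_fun hP.compl hoff]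
  congr 1
  refine tsum_congr ?_
  rintro ⟨_, x, hx, rfl⟩
  exact hcomp x hx

lemma nontrivial_connectedComponentIn_inter {S U : Set ℝ} (hS : S.OrdConnected)
    (hSn : S.Nontrivial) (hU : IsOpen U) {x : ℝ} (hx : x ∈ U ∩ S) :
    (connectedComponentIn (U ∩ S) x).Nontrivial := by
  obtain ⟨ε, hε, hball⟩ := Metric.isOpen_iff.1 hU x hx.1
  have hpre : IsPreconnected (Metric.ball x ε ∩ S) := by
    rw [Real.ball_eq_Ioo]
    exact (ordConnected_Ioo.inter hS).isPreconnected
  have hsub : Metric.ball x ε ∩ S ⊆ connectedComponentIn (U ∩ S) x :=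
    hpre.subset_connectedComponentIn ⟨Metric.mem_ball_self hε, hx.2⟩
      (inter_subset_inter_left S hball)
  obtain ⟨y, hy, hyx⟩ := accPt_iff_nhds.1
    (hS.isPreconnected.preperfect_of_nontrivial hSn x hx.2) _ (Metric.ball_mem_nhds x hε)
  exact ⟨y, hsub hy, x, mem_connectedComponentIn hx, hyx⟩

end ConnectedComponentIn

section Component

variable {P : Set ℝ} {s t x y : ℝ}

lemma compInf_eq_of_mem (hy : y ∈ connectedComponentIn P x) : compInf P y = compInf P x := by
  rw [compInf, compInf, connectedComponentIn_eq hy]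

lemma compSup_eq_of_mem (hy : y ∈ connectedComponentIn P x) : compSup P y = compSup P x := by
  rw [compSup, compSup, connectedComponentIn_eq hy]

lemma connectedComponentIn_subset_Icc (hP : Bornology.IsBounded P) :
    connectedComponentIn P x ⊆ Icc (compInf P x) (compSup P x) :=
  (hP.subset (connectedComponentIn_subset P x)).subset_Icc_sInf_sSup

lemma Ioo_subset_connectedComponentIn (hP : Bornology.IsBounded P) (hx : x ∈ P) :
    Ioo (compInf P x) (compSup P x) ⊆ connectedComponentIn P x :=
  have hC := hP.subset (connectedComponentIn_subset P x)
  (isConnected_connectedComponentIn_iff.2 hx).Ioo_csInf_csSup_subset hC.bddBelow hC.bddAbove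

lemma connectedComponentIn_ae_eq_Ioc (hP : Bornology.IsBounded P) (hx : x ∈ P) :
    connectedComponentIn P x =ᵐ[volume] Ioc (compInf P x) (compSup P x) :=
  ((connectedComponentIn_subset_Icc hP).eventuallyLE.trans Ioc_ae_eq_Icc.symm.le).antisymm
    (Ioo_ae_eq_Ioc.symm.le.trans (Ioo_subset_connectedComponentIn hP hx).eventuallyLE)

lemma compInf_notMem_Ioo (hP : Bornology.IsBounded P) (hx : x ∈ P) (hy : y ∈ P) :
    compInf P x ∉ Ioo (compInf P y) (compSup P y) := by
  intro hmem
  have hclosure : compInf P x ∈ closure (connectedComponentIn P x) :=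
    csInf_mem_closure ⟨x, mem_connectedComponentIn hx⟩
      (hP.subset (connectedComponentIn_subset P x)).bddBelow
  obtain ⟨z, hzy, hzx⟩ := mem_closure_iff.1 hclosure _ isOpen_Ioo hmem
  have heq : compInf P y = compInf P x :=
    (compInf_eq_of_mem (Ioo_subset_connectedComponentIn hP hy hzy)).symm.trans
      (compInf_eq_of_mem hzx)
  exact hmem.1.ne heq

lemma compSup_le_of_notMem (hs : s ∈ P) (hst : s ≤ t) (ht : t ∉ P) : compSup P s ≤ t := by
  refine csSup_le ⟨s, mem_connectedComponentIn hs⟩ fun y hy => ?_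
  by_contra! hty
  exact ht (connectedComponentIn_subset P s
    (isPreconnected_connectedComponentIn.Icc_subset (mem_connectedComponentIn hs) hy ⟨hst, hty.le⟩))

lemma le_compInf_of_notMem (ht : t ∈ P) (hst : s ≤ t) (hs : s ∉ P) : s ≤ compInf P t := by
  refine le_csInf ⟨t, mem_connectedComponentIn ht⟩ fun y hy => ?_
  by_contra! hys
  exact hs (connectedComponentIn_subset P t
    (isPreconnected_connectedComponentIn.Icc_subset hy (mem_connectedComponentIn ht) ⟨hys.le, hst⟩))

lemma compInf_mem_Icc {a b : ℝ} (hP : P ⊆ Icc a b) (hx : x ∈ P) : compInf P x ∈ Icc a b := by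
  have hC := (connectedComponentIn_subset P x).trans hP
  have hxC := mem_connectedComponentIn hx
  exact ⟨le_csInf ⟨x, hxC⟩ fun y hy => (hC hy).1,
    (csInf_le (bddBelow_Icc.mono hC) hxC).trans (hP hx).2⟩

lemma compSup_mem_Icc {a b : ℝ} (hP : P ⊆ Icc a b) (hx : x ∈ P) : compSup P x ∈ Icc a b := by
  have hC := (connectedComponentIn_subset P x).trans hP
  have hxC := mem_connectedComponentIn hx
  exact ⟨(hP hx).1.trans (le_csSup (bddAbove_Icc.mono hC) hxC),
    csSup_le ⟨x, hxC⟩ fun y hy => (hC hy).2⟩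

lemma setIntegral_connectedComponentIn_restrict_Ioc {E : Type*} [NormedAddCommGroup E]
    [NormedSpace ℝ E] {a b : ℝ} (hP : P ⊆ Icc a b) (hx : x ∈ P) (g : ℝ → E) :
    ∫ y in connectedComponentIn P x, g y ∂(volume.restrict (Ioc a t)) =
      ∫ y in Ioc (compInf P x) (min (compSup P x) t), g y := by
  have hae := (connectedComponentIn_ae_eq_Ioc ((Metric.isBounded_Icc a b).subset hP) hx).inter
    (Filter.EventuallyEq.refl (ae volume) (Ioc a t))
  rw [Ioc_inter_Ioc, sup_eq_left.2 (compInf_mem_Icc hP hx).1] at hae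
  rw [Measure.restrict_restrict isPreconnected_connectedComponentIn.measurableSet]
  exact setIntegral_congr_set hae

namespace IsPoolingSet

lemma subset_Icc (hP : IsPoolingSet P) : P ⊆ Icc 0 1 := by
  obtain ⟨U, -, rfl⟩ := hP
  exact inter_subset_right

lemma isBounded (hP : IsPoolingSet P) : Bornology.IsBounded P :=
  (Metric.isBounded_Icc 0 1).subset hP.subset_Icc

lemma compInf_lt_compSup (hP : IsPoolingSet P) (hx : x ∈ P) : compInf P x < compSup P x := by
  have hnontrivial : (connectedComponentIn P x).Nontrivial := by
    obtain ⟨U, hU, rfl⟩ := hP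
    have h01 : (Icc (0 : ℝ) 1).Nontrivial :=
      ⟨0, left_mem_Icc.2 zero_le_one, 1, right_mem_Icc.2 zero_le_one, zero_ne_one⟩
    exact nontrivial_connectedComponentIn_inter ordConnected_Icc h01 hU hx
  obtain ⟨y, hy, z, hz, hyz⟩ := hnontrivial.exists_lt
  have hbounds := connectedComponentIn_subset_Icc (x := x) hP.isBounded
  exact (hbounds hy).1.trans_lt (hyz.trans_le (hbounds hz).2)

lemma countable_image_connectedComponentIn (hP : IsPoolingSet P) :
    (connectedComponentIn P '' P).Countable := by
  refine (pairwiseDisjoint_image_connectedComponentIn P).countable_of_nonempty_interior ?_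
  rintro _ ⟨x, hx, rfl⟩
  exact (nonempty_Ioo.2 (hP.compInf_lt_compSup hx)).mono
    (isOpen_Ioo.subset_interior_iff.2 (Ioo_subset_connectedComponentIn hP.isBounded hx))

end IsPoolingSet

end Component

section PooledInterval

variable {f : ℝ → ℝ} {a b θ : ℝ}

lemma strictMonoOn_cdfF (hf : IntegrableOn f (Icc 0 1)) (hpos : ∀ t ∈ Ioo 0 1, 0 < f t) :
    StrictMonoOn (cdfF f) (Icc 0 1) := by
  intro a ha b hb hab
  have hfab := intervalIntegrable_of_mem_Icc hf ha hb
  have hadd := intervalIntegral.integral_add_adjacent_intervals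
    (intervalIntegrable_of_mem_Icc hf (left_mem_Icc.2 zero_le_one) ha) hfab
  have hmass : 0 < ∫ t in a..b, f t := intervalIntegral.intervalIntegral_pos_of_pos_on hfab
    (fun t ht => hpos t (Ioo_subset_Ioo ha.1 hb.2 ht)) hab
  simp only [cdfF]
  linarith

/-- The distribution function obtained from `cdfF f` by pooling the single interval `(a, b)`:
all its mass is moved to the conditional mean. Meaningful on `[a, b]` only. -/
def pooledCdf (f : ℝ → ℝ) (a b t : ℝ) : ℝ :=
  if t < condMean f a b then cdfF f a else cdfF f b

lemma pooledCdf_mem_Icc (h : cdfF f a ≤ cdfF f b) (t : ℝ) :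
    pooledCdf f a b t ∈ Icc (cdfF f a) (cdfF f b) := by
  unfold pooledCdf
  split_ifs
  exacts [left_mem_Icc.2 h, right_mem_Icc.2 h]

lemma monotone_pooledCdf (h : cdfF f a ≤ cdfF f b) : Monotone (pooledCdf f a b) := by
  intro s t hst
  by_cases ht : t < condMean f a b
  · simp only [pooledCdf, if_pos ht, if_pos (hst.trans_lt ht), le_refl]
  · calc pooledCdf f a b s ≤ cdfF f b := (pooledCdf_mem_Icc h s).2
      _ = pooledCdf f a b t := (if_neg ht).symm

lemma integral_cdfF_eq_condMean (h0 : IntervalIntegrable f volume 0 a)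
    (hf : IntervalIntegrable f volume a b) (hne : cdfF f a ≠ cdfF f b) :
    ∫ t in a..b, cdfF f t =
      (condMean f a b - a) * cdfF f a + (b - condMean f a b) * cdfF f b := by
  have hF : ∀ x ∈ uIcc a b, cdfF f x = cdfF f a + ∫ t in a..x, f t := fun x hx =>
    (intervalIntegral.integral_add_adjacent_intervals h0
      (hf.mono_set (uIcc_subset_uIcc_left hx))).symm
  have hmass : ∫ t in a..b, f t = cdfF f b - cdfF f a := by
    rw [hF b right_mem_uIcc, add_sub_cancel_left]
  have hmean : ∫ t in a..b, t * f t = condMean f a b * (cdfF f b - cdfF f a) := by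
    rw [condMean, hmass, div_mul_cancel₀ _ (sub_ne_zero.2 hne.symm)]
  have hprim : IntervalIntegrable (fun x => ∫ t in a..x, f t) volume a b :=
    (hf.absolutelyContinuousOnInterval_intervalIntegral left_mem_uIcc).continuousOn
      |>.intervalIntegrable
  calc ∫ x in a..b, cdfF f x
      = (b - a) * cdfF f a + ∫ x in a..b, ∫ t in a..x, f t := by
        rw [intervalIntegral.integral_congr hF,
          intervalIntegral.integral_add intervalIntegrable_const hprim,
          intervalIntegral.integral_const, smul_eq_mul]
    _ = (b - a) * cdfF f a + (b * (∫ t in a..b, f t) - ∫ t in a..b, t * f t) := by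
        simp_rw [integral_primitive_eq_integral_sub_mul hf, sub_mul]
        rw [intervalIntegral.integral_sub (hf.const_mul b)
          (hf.continuousOn_mul (g := fun t => t) continuousOn_id),
          intervalIntegral.integral_const_mul]
    _ = (condMean f a b - a) * cdfF f a + (b - condMean f a b) * cdfF f b := by
        rw [hmass, hmean]
        ring

lemma condMean_mem_Ioo (h0 : IntervalIntegrable f volume 0 a)
    (hf : IntervalIntegrable f volume a b) (hF : StrictMonoOn (cdfF f) (Icc a b)) (hab : a < b) :
    condMean f a b ∈ Ioo a b := by
  have ha := left_mem_Icc.2 hab.le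
  have hb := right_mem_Icc.2 hab.le
  have hFab : cdfF f a < cdfF f b := hF ha hb hab
  have hFint : IntervalIntegrable (cdfF f) volume a b :=
    intervalIntegrable_of_mem_Icc (hF.monotoneOn.integrableOn_isCompact isCompact_Icc) ha hb
  have hlower := integral_lt_integral_of_lt_on_Ioo hab (intervalIntegrable_const (c := cdfF f a))
    hFint fun t ht => hF ha (Ioo_subset_Icc_self ht) ht.1
  have hupper := integral_lt_integral_of_lt_on_Ioo hab hFint
    (intervalIntegrable_const (c := cdfF f b)) fun t ht => hF (Ioo_subset_Icc_self ht) hb ht.2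
  rw [intervalIntegral.integral_const, smul_eq_mul,
    integral_cdfF_eq_condMean h0 hf hFab.ne] at hlower hupper
  have hgap := sub_pos.2 hFab
  have hleft : 0 < (condMean f a b - a) * (cdfF f b - cdfF f a) := by linarith
  have hright : 0 < (b - condMean f a b) * (cdfF f b - cdfF f a) := by linarith
  exact ⟨sub_pos.1 ((mul_pos_iff_of_pos_right hgap).1 hleft),
    sub_pos.1 ((mul_pos_iff_of_pos_right hgap).1 hright)⟩

lemma integral_pooledCdf (h0 : IntervalIntegrable f volume 0 a)
    (hf : IntervalIntegrable f volume a b) (hF : StrictMonoOn (cdfF f) (Icc a b)) (hab : a < b) :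
    ∫ t in a..b, pooledCdf f a b t = ∫ t in a..b, cdfF f t := by
  have hFab := hF (left_mem_Icc.2 hab.le) (right_mem_Icc.2 hab.le) hab
  simp only [pooledCdf]
  rw [integral_ite_lt (Ioo_subset_Icc_self (condMean_mem_Ioo h0 hf hF hab)),
    integral_cdfF_eq_condMean h0 hf hFab.ne, smul_eq_mul, smul_eq_mul]

lemma integral_pooledCdf_lt (h0 : IntervalIntegrable f volume 0 a)
    (hf : IntervalIntegrable f volume a b) (hF : StrictMonoOn (cdfF f) (Icc a b))
    (hθ : θ ∈ Ioo a b) :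
    ∫ t in a..θ, pooledCdf f a b t < ∫ t in a..θ, cdfF f t := by
  have hab := hθ.1.trans hθ.2
  have ha := left_mem_Icc.2 hab.le
  have hb := right_mem_Icc.2 hab.le
  have hpool : ∀ x y, IntervalIntegrable (pooledCdf f a b) volume x y := fun x y =>
    (monotone_pooledCdf (hF ha hb hab).le).intervalIntegrable
  have hFint : IntegrableOn (cdfF f) (Icc a b) :=
    hF.monotoneOn.integrableOn_isCompact isCompact_Icc
  have hleft := intervalIntegrable_of_mem_Icc hFint ha (Ioo_subset_Icc_self hθ)
  have hright := intervalIntegrable_of_mem_Icc hFint (Ioo_subset_Icc_self hθ) hb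
  rcases le_or_gt θ (condMean f a b) with hm | hm
  · refine integral_lt_integral_of_lt_on_Ioo hθ.1 (hpool a θ) hleft fun t ht => ?_
    rw [pooledCdf, if_pos (ht.2.trans_le hm)]
    exact hF ha ⟨ht.1.le, (ht.2.trans hθ.2).le⟩ ht.1
  -- The integrals over `[a, b]` agree, so the surplus on `(θ, b)` is the deficit on `(a, θ)`.
  · have hlt := integral_lt_integral_of_lt_on_Ioo hθ.2 hright (hpool θ b) fun t ht => by
      rw [pooledCdf, if_neg (hm.trans ht.1).not_gt]
      exact hF ⟨(hθ.1.trans ht.1).le, ht.2.le⟩ hb ht.2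
    have htotal := integral_pooledCdf h0 hf hF hab
    rw [← intervalIntegral.integral_add_adjacent_intervals (hpool a θ) (hpool θ b),
      ← intervalIntegral.integral_add_adjacent_intervals hleft hright] at htotal
    linarith

end PooledInterval

section Pooling

variable {f : ℝ → ℝ} {P : Set ℝ} {s t u x θ : ℝ}

lemma Gp_of_notMem (ht : t ∉ P) : Gp f P t = cdfF f t := if_neg ht

lemma Gp_of_mem_connectedComponentIn (ht : t ∈ connectedComponentIn P x) :
    Gp f P t = pooledCdf f (compInf P x) (compSup P x) t := by
  rw [Gp, if_pos (connectedComponentIn_subset P x ht), compInf_eq_of_mem ht,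
    compSup_eq_of_mem ht, pooledCdf]

lemma Gam_empty (f : ℝ → ℝ) (θ : ℝ) : Gam f ∅ θ = ∫ t in (0 : ℝ)..θ, cdfF f t :=
  intervalIntegral.integral_congr fun t _ => Gp_of_notMem (notMem_empty t)

lemma cdfF_compInf_le_cdfF_compSup (hF : MonotoneOn (cdfF f) (Icc 0 1)) (hP : P ⊆ Icc 0 1)
    (hx : x ∈ P) : cdfF f (compInf P x) ≤ cdfF f (compSup P x) :=
  have hmem := connectedComponentIn_subset_Icc ((Metric.isBounded_Icc 0 1).subset hP)
    (mem_connectedComponentIn hx)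
  hF (compInf_mem_Icc hP hx) (compSup_mem_Icc hP hx) (hmem.1.trans hmem.2)

lemma Gp_le_cdfF_of_notMem (hF : MonotoneOn (cdfF f) (Icc 0 1)) (hP : P ⊆ Icc 0 1)
    (hs : s ∈ Icc 0 1) (hu : u ∈ Icc 0 1) (hsu : s ≤ u) (huP : u ∉ P) :
    Gp f P s ≤ cdfF f u := by
  by_cases hsP : s ∈ P
  · rw [Gp_of_mem_connectedComponentIn (mem_connectedComponentIn hsP)]
    exact (pooledCdf_mem_Icc (cdfF_compInf_le_cdfF_compSup hF hP hsP) s).2.trans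
      (hF (compSup_mem_Icc hP hsP) hu (compSup_le_of_notMem hsP hsu huP))
  · rw [Gp_of_notMem hsP]
    exact hF hs hu hsu

lemma cdfF_le_Gp_of_notMem (hF : MonotoneOn (cdfF f) (Icc 0 1)) (hP : P ⊆ Icc 0 1)
    (hu : u ∈ Icc 0 1) (ht : t ∈ Icc 0 1) (hut : u ≤ t) (huP : u ∉ P) :
    cdfF f u ≤ Gp f P t := by
  by_cases htP : t ∈ P
  · rw [Gp_of_mem_connectedComponentIn (mem_connectedComponentIn htP)]
    exact (hF hu (compInf_mem_Icc hP htP) (le_compInf_of_notMem htP hut huP)).trans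
      (pooledCdf_mem_Icc (cdfF_compInf_le_cdfF_compSup hF hP htP) t).1
  · rw [Gp_of_notMem htP]
    exact hF hu ht hut

lemma monotoneOn_Gp (hF : MonotoneOn (cdfF f) (Icc 0 1)) (hP : P ⊆ Icc 0 1) :
    MonotoneOn (Gp f P) (Icc 0 1) := by
  intro s hs t ht hst
  by_cases hcomp : t ∈ connectedComponentIn P s
  · have hsP : s ∈ P := connectedComponentIn_nonempty_iff.1 ⟨t, hcomp⟩
    rw [Gp_of_mem_connectedComponentIn (mem_connectedComponentIn hsP),
      Gp_of_mem_connectedComponentIn hcomp]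
    exact monotone_pooledCdf (cdfF_compInf_le_cdfF_compSup hF hP hsP) hst
  · obtain ⟨u, hu, huP⟩ : ∃ u ∈ Icc s t, u ∉ P := by
      by_contra! hsub
      exact hcomp (isPreconnected_Icc.subset_connectedComponentIn (left_mem_Icc.2 hst) hsub
        (right_mem_Icc.2 hst))
    have hu01 : u ∈ Icc 0 1 := ⟨hs.1.trans hu.1, hu.2.trans ht.2⟩
    exact (Gp_le_cdfF_of_notMem hF hP hs hu01 hu.1 huP).trans
      (cdfF_le_Gp_of_notMem hF hP hu01 ht hu.2 huP)

lemma integrableOn_Gp (hF : MonotoneOn (cdfF f) (Icc 0 1)) (hP : P ⊆ Icc 0 1) :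
    IntegrableOn (Gp f P) (Icc 0 1) :=
  (monotoneOn_Gp hF hP).integrableOn_isCompact isCompact_Icc

lemma integral_Gp_compInf (hP : Bornology.IsBounded P) (hx : x ∈ P)
    (hθ : θ ∈ Icc (compInf P x) (compSup P x)) :
    ∫ t in (compInf P x)..θ, Gp f P t =
      ∫ t in (compInf P x)..θ, pooledCdf f (compInf P x) (compSup P x) t :=
  intervalIntegral.integral_congr_Ioo_of_le hθ.1 fun _ ht => Gp_of_mem_connectedComponentIn
    (Ioo_subset_connectedComponentIn hP hx (Ioo_subset_Ioo_right hθ.2 ht))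

lemma integral_Gp_component (hf : IntegrableOn f (Icc 0 1))
    (hF : StrictMonoOn (cdfF f) (Icc 0 1)) (hP : IsPoolingSet P) (hx : x ∈ P) :
    ∫ t in (compInf P x)..(compSup P x), Gp f P t =
      ∫ t in (compInf P x)..(compSup P x), cdfF f t := by
  have hξ := compInf_mem_Icc hP.subset_Icc hx
  have hζ := compSup_mem_Icc hP.subset_Icc hx
  have hlt := hP.compInf_lt_compSup hx
  rw [integral_Gp_compInf hP.isBounded hx (right_mem_Icc.2 hlt.le)]
  exact integral_pooledCdf (intervalIntegrable_of_mem_Icc hf (left_mem_Icc.2 zero_le_one) hξ)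
    (intervalIntegrable_of_mem_Icc hf hξ hζ) (hF.mono (Icc_subset_Icc hξ.1 hζ.2)) hlt

lemma integral_Gp_lt_of_mem_Ioo (hf : IntegrableOn f (Icc 0 1))
    (hF : StrictMonoOn (cdfF f) (Icc 0 1)) (hP : IsPoolingSet P) (hx : x ∈ P)
    (hθ : θ ∈ Ioo (compInf P x) (compSup P x)) :
    ∫ t in (compInf P x)..θ, Gp f P t < ∫ t in (compInf P x)..θ, cdfF f t := by
  have hξ := compInf_mem_Icc hP.subset_Icc hx
  have hζ := compSup_mem_Icc hP.subset_Icc hx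
  rw [integral_Gp_compInf hP.isBounded hx (Ioo_subset_Icc_self hθ)]
  exact integral_pooledCdf_lt (intervalIntegrable_of_mem_Icc hf (left_mem_Icc.2 zero_le_one) hξ)
    (intervalIntegrable_of_mem_Icc hf hξ hζ) (hF.mono (Icc_subset_Icc hξ.1 hζ.2)) hθ

lemma Gam_eq_of_notMem_Ioo (hf : IntegrableOn f (Icc 0 1))
    (hF : StrictMonoOn (cdfF f) (Icc 0 1)) (hP : IsPoolingSet P) (hθ : θ ∈ Icc 0 1)
    (hpool : ∀ x ∈ P, θ ∉ Ioo (compInf P x) (compSup P x)) : Gam f P θ = Gam f ∅ θ := by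
  have hsub : Ioc 0 θ ⊆ Icc 0 1 := Ioc_subset_Icc_self.trans (Icc_subset_Icc_right hθ.2)
  have hGint := integrableOn_Gp hF.monotoneOn hP.subset_Icc
  rw [Gam_empty, Gam, intervalIntegral.integral_of_le hθ.1, intervalIntegral.integral_of_le hθ.1]
  refine integral_eq_of_forall_connectedComponentIn hP.countable_image_connectedComponentIn
    (fun x _ => isPreconnected_connectedComponentIn.measurableSet) (hGint.mono_set hsub)
    ((hF.monotoneOn.integrableOn_isCompact isCompact_Icc).mono_set hsub)
    (fun t ht => Gp_of_notMem ht) fun x hx => ?_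
  simp only [setIntegral_connectedComponentIn_restrict_Ioc hP.subset_Icc hx]
  rcases le_or_gt θ (compInf P x) with hle | hlt
  · simp only [Ioc_eq_empty_of_le (min_le_of_right_le hle), setIntegral_empty]
  · have hζ : compSup P x ≤ θ := not_lt.1 fun h => hpool x hx ⟨hlt, h⟩
    rw [min_eq_left hζ, ← intervalIntegral.integral_of_le (hP.compInf_lt_compSup hx).le,
      ← intervalIntegral.integral_of_le (hP.compInf_lt_compSup hx).le]
    exact integral_Gp_component hf hF hP hx

lemma Gam_lt_of_mem_Ioo (hf : IntegrableOn f (Icc 0 1)) (hF : StrictMonoOn (cdfF f) (Icc 0 1))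
    (hP : IsPoolingSet P) (hx : x ∈ P) (hθ : θ ∈ Ioo (compInf P x) (compSup P x)) :
    Gam f P θ < Gam f ∅ θ := by
  have h0 : (0 : ℝ) ∈ Icc 0 1 := left_mem_Icc.2 zero_le_one
  have hξ := compInf_mem_Icc hP.subset_Icc hx
  have hθ01 : θ ∈ Icc 0 1 :=
    ⟨hξ.1.trans hθ.1.le, hθ.2.le.trans (compSup_mem_Icc hP.subset_Icc hx).2⟩
  have hGint := integrableOn_Gp hF.monotoneOn hP.subset_Icc
  have hFint := hF.monotoneOn.integrableOn_isCompact (μ := volume) isCompact_Icc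
  have heq : Gam f P (compInf P x) = Gam f ∅ (compInf P x) :=
    Gam_eq_of_notMem_Ioo hf hF hP hξ fun y hy => compInf_notMem_Ioo hP.isBounded hx hy
  calc Gam f P θ = Gam f P (compInf P x) + ∫ t in (compInf P x)..θ, Gp f P t :=
        (intervalIntegral.integral_add_adjacent_intervals
          (intervalIntegrable_of_mem_Icc hGint h0 hξ)
          (intervalIntegrable_of_mem_Icc hGint hξ hθ01)).symm
    _ < Gam f ∅ (compInf P x) + ∫ t in (compInf P x)..θ, cdfF f t := by
        rw [heq]
        gcongr
        exact integral_Gp_lt_of_mem_Ioo hf hF hP hx hθ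
    _ = Gam f ∅ θ := by
        rw [Gam_empty, Gam_empty]
        exact intervalIntegral.integral_add_adjacent_intervals
          (intervalIntegrable_of_mem_Icc hFint h0 hξ)
          (intervalIntegrable_of_mem_Icc hFint hξ hθ01)

theorem Gam_eq_iff_not_pooled_general (hf : IntegrableOn f (Icc 0 1))
    (hF : StrictMonoOn (cdfF f) (Icc 0 1)) (hP : IsPoolingSet P) (hθ : θ ∈ Icc 0 1) :
    (Gam f P θ = Gam f ∅ θ ↔ ¬ ∃ θ' ∈ P, θ ∈ Ioo (compInf P θ') (compSup P θ')) ∧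
      ((∃ θ' ∈ P, θ ∈ Ioo (compInf P θ') (compSup P θ')) → Gam f P θ < Gam f ∅ θ) := by
  have hlt : (∃ θ' ∈ P, θ ∈ Ioo (compInf P θ') (compSup P θ')) → Gam f P θ < Gam f ∅ θ :=
    fun ⟨_, hx, hθx⟩ => Gam_lt_of_mem_Ioo hf hF hP hx hθx
  refine ⟨⟨fun heq hpool => (hlt hpool).ne heq, fun hpool => ?_⟩, hlt⟩
  exact Gam_eq_of_notMem_Ioo hf hF hP hθ fun x hx hθx => hpool ⟨x, hx, hθx⟩

end Pooling

/-- For every open pooling set `P = ⋃ᵢ (ξᵢ, ζᵢ)` and every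
`θ ∈ [0,1]`: `Γ_P(θ) = Γ_∅(θ)` iff `θ` lies in none of the open real intervals
`(ξᵢ, ζᵢ)`; and `Γ_P(θ) < Γ_∅(θ)` whenever `θ ∈ (ξᵢ, ζᵢ)` for some `i`. -/
theorem Gam_eq_iff_not_pooled (f : ℝ → ℝ) (hf : IsDensity f)
    (P : Set ℝ) (hP : IsPoolingSet P) (θ : ℝ) (hθ : θ ∈ Icc (0:ℝ) 1) :
    (Gam f P θ = Gam f (∅ : Set ℝ) θ ↔
      ¬ ∃ θ' ∈ P, θ ∈ Ioo (compInf P θ') (compSup P θ')) ∧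
    ((∃ θ' ∈ P, θ ∈ Ioo (compInf P θ') (compSup P θ')) →
      Gam f P θ < Gam f (∅ : Set ℝ) θ) := by
  exact Gam_eq_iff_not_pooled_general hf.2.1
    (strictMonoOn_cdfF hf.2.1 fun t ht => hf.1 t (Ioo_subset_Icc_self ht)) hP hθ
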